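/- Let G(x,y,t) := Γ_N(x−y,t) − Γ_N(x−y*,t) + H(x,y,t) with H as above. Then for every y in the closed upper half-space Ω̄ and every t > 0, ∫_Ω G(x,y,t) dx + ∫_{∂Ω} G(x,y,t) dσ(x) = 1. -/

import Mathlib

open Real MeasureTheory Set

/-- The `N`-dimensional Gauss kernel `Γ_N(x,t) = (4πt)^{-N/2} e^{-|x|²/(4t)}`. -/
noncomputable def gauss (N : ℕ) (x : Fin N → ℝ) (t : ℝ) : ℝ :=
  (4 * π * t) ^ (-(N : ℝ) / 2) * Real.exp (-(∑ i, x i ^ 2) / (4 * t))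

/-- Reflection `y* = (y', -y_N)` across the boundary of the half-space. -/
noncomputable def ystar (N : ℕ) (y : Fin (N + 1) → ℝ) : Fin (N + 1) → ℝ :=
  Function.update y (Fin.last N) (-(y (Fin.last N)))

/-- The last unit vector `e_N`. -/
noncomputable def eN (N : ℕ) : Fin (N + 1) → ℝ := Pi.single (Fin.last N) 1

/-- `H(x,y,t) = ∫_0^t (4π(t-τ))^{-N/2} ((x_N+y_N+τ)/(t-τ)) e^{-|x-y*+τe_N|²/(4(t-τ))} dτ`. -/
noncomputable def Hexp (N : ℕ) (x y : Fin (N + 1) → ℝ) (t : ℝ) : ℝ :=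
  ∫ τ in (0 : ℝ)..t,
    (4 * π * (t - τ)) ^ (-((N : ℝ) + 1) / 2) *
      ((x (Fin.last N) + y (Fin.last N) + τ) / (t - τ)) *
      Real.exp (-(∑ i, (x i - ystar N y i + τ * eN N i) ^ 2) / (4 * (t - τ)))

/-- The fundamental solution `G(x,y,t) = Γ_N(x-y,t) - Γ_N(x-y*,t) + H(x,y,t)`. -/
noncomputable def Gker (N : ℕ) (x y : Fin (N + 1) → ℝ) (t : ℝ) : ℝ :=
  gauss (N + 1) (x - y) t - gauss (N + 1) (x - ystar N y) t + Hexp N x y t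

/-- The error function `(2/√π) ∫_0^u e^{-v²} dv`. -/
noncomputable def errorFn (u : ℝ) : ℝ := ∫ v in (0 : ℝ)..u, 2 / √π * Real.exp (-v ^ 2)

/-- The one-dimensional heat kernel. -/
noncomputable def heatKernel (z s : ℝ) : ℝ :=
  (4 * π * s) ^ (-(1 : ℝ) / 2) * Real.exp (-z ^ 2 / (4 * s))

lemma hasDerivAt_errorFn (u : ℝ) : HasDerivAt errorFn (2 / √π * Real.exp (-u ^ 2)) u := by
  have hc : Continuous fun v : ℝ => 2 / √π * Real.exp (-v ^ 2) := by fun_prop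
  exact hc.integral_hasStrictDerivAt 0 u |>.hasDerivAt

lemma errorFn_neg (u : ℝ) : errorFn (-u) = -errorFn u := by
  have h := intervalIntegral.integral_comp_neg (a := 0) (b := u)
    (fun v : ℝ => 2 / √π * Real.exp (-v ^ 2))
  simp only [neg_sq, neg_zero] at h
  rw [errorFn, errorFn, intervalIntegral.integral_symm, ← h]

lemma tendsto_errorFn_atTop : Filter.Tendsto errorFn Filter.atTop (nhds 1) := by
  have h1 : Integrable (fun v : ℝ => 2 / √π * Real.exp (-v ^ 2)) := by
    simpa using (integrable_exp_neg_mul_sq (b := 1) one_pos).const_mul (2 / √π)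
  have h := intervalIntegral_tendsto_integral_Ioi 0 h1.integrableOn Filter.tendsto_id
  have h2 : ∫ v in Ioi (0 : ℝ), 2 / √π * Real.exp (-v ^ 2) = 1 := by
    have := integral_gaussian_Ioi 1
    simp only [neg_mul, one_mul, div_one] at this
    rw [integral_const_mul, this]
    have : √π ≠ 0 := by positivity
    field_simp
  rwa [h2] at h

lemma heatKernel_nonneg (z : ℝ) {s : ℝ} (hs : 0 < s) : 0 ≤ heatKernel z s := by
  unfold heatKernel; positivity

lemma heatKernel_eq (z : ℝ) {s : ℝ} (hs : 0 < s) :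
    heatKernel z s = 1 / (2 * √π * √s) * Real.exp (-(z / (2 * √s)) ^ 2) := by
  have h1 : (4 * π * s) ^ (-(1 : ℝ) / 2) = 1 / (2 * √π * √s) := by
    rw [neg_div, Real.rpow_neg (by positivity), ← Real.sqrt_eq_rpow,
      Real.sqrt_mul (by positivity), Real.sqrt_mul (by positivity),
      show (4 : ℝ) = 2 ^ 2 by norm_num, Real.sqrt_sq (by norm_num), one_div]
  rw [heatKernel, h1, div_pow, mul_pow, Real.sq_sqrt hs.le]
  congr 2; ring

lemma hasDerivAt_errorFn_space (z : ℝ) {s : ℝ} (hs : 0 < s) :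
    HasDerivAt (fun z => errorFn (z / (2 * √s))) (2 * heatKernel z s) z := by
  have h := (hasDerivAt_errorFn (z / (2 * √s))).comp z ((hasDerivAt_id z).div_const (2 * √s))
  refine h.congr_deriv ?_
  rw [heatKernel_eq z hs]
  have : √π ≠ 0 := by positivity
  have : √s ≠ 0 := by positivity
  field_simp

lemma hasDerivAt_errorFn_time (a t τ : ℝ) (h : τ < t) :
    HasDerivAt (fun τ => errorFn ((a + τ) / (2 * √(t - τ))))
      (2 * heatKernel (a + τ) (t - τ)
        + heatKernel (a + τ) (t - τ) * ((a + τ) / (t - τ))) τ := by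
  have hs : 0 < t - τ := sub_pos.2 h
  have hq : √(t - τ) ≠ 0 := by positivity
  have hd := ((hasDerivAt_id τ).const_add a).div
    ((((hasDerivAt_id τ).const_sub t).sqrt hs.ne').const_mul 2) (by simpa using hq)
  have := (hasDerivAt_errorFn ((a + τ) / (2 * √(t - τ)))).comp τ hd
  refine this.congr_deriv ?_
  rw [heatKernel_eq _ hs]
  simp only [id]
  have hp : √π ≠ 0 := by positivity
  have hsq : t - τ = √(t - τ) ^ 2 := (Real.sq_sqrt hs.le).symm
  generalize √(t - τ) = q at *
  rw [hsq]
  field_simp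
  ring

lemma hasDerivAt_heatKernel (z : ℝ) {s : ℝ} (hs : 0 < s) :
    HasDerivAt (fun z => -2 * heatKernel z s) (heatKernel z s * (z / s)) z := by
  have h : HasDerivAt (fun z : ℝ => -z ^ 2 / (4 * s)) (-(2 * z) / (4 * s)) z := by
    simpa using ((hasDerivAt_pow 2 z).neg.div_const (4 * s))
  refine ((h.exp.const_mul ((4 * π * s) ^ (-(1 : ℝ) / 2))).const_mul (-2)).congr_deriv ?_
  unfold heatKernel
  field_simp
  ring

lemma tendsto_heatKernel_atTop {s : ℝ} (hs : 0 < s) :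
    Filter.Tendsto (fun z => -2 * heatKernel z s) Filter.atTop (nhds 0) := by
  have h : Filter.Tendsto (fun z : ℝ => -z ^ 2 / (4 * s)) Filter.atTop Filter.atBot := by
    simp only [neg_div]
    exact Filter.tendsto_neg_atTop_atBot.comp
      ((Filter.tendsto_pow_atTop two_ne_zero).atTop_div_const (by positivity))
  simpa [heatKernel] using
    ((Real.tendsto_exp_atBot.comp h).const_mul ((4 * π * s) ^ (-(1 : ℝ) / 2))).const_mul (-2)

lemma integrable_heatKernel {s : ℝ} (hs : 0 < s) : Integrable (fun z => heatKernel z s) := by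
  have h := (integrable_exp_neg_mul_sq (b := 1 / (4 * s)) (by positivity)).const_mul
    ((4 * π * s) ^ (-(1 : ℝ) / 2))
  refine h.congr (Filter.Eventually.of_forall fun z => ?_)
  simp only [heatKernel]
  congr 2; ring

lemma integral_heatKernel {s : ℝ} (hs : 0 < s) : ∫ z, heatKernel z s = 1 := by
  have h (z : ℝ) : heatKernel z s
      = (4 * π * s) ^ (-(1 : ℝ) / 2) * Real.exp (-(1 / (4 * s)) * z ^ 2) := by
    rw [heatKernel]; congr 2; ring
  simp only [h]
  rw [integral_const_mul, integral_gaussian, neg_div, Real.rpow_neg (by positivity),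
    ← Real.sqrt_eq_rpow, show π / (1 / (4 * s)) = 4 * π * s by field_simp]
  have : √(4 * π * s) ≠ 0 := by positivity
  field_simp

lemma gauss_eq_prod {N : ℕ} (x : Fin N → ℝ) {s : ℝ} (hs : 0 < s) :
    gauss N x s = ∏ i, heatKernel (x i) s := by
  simp only [gauss, heatKernel, Finset.prod_mul_distrib, Finset.prod_const, Finset.card_univ,
    Fintype.card_fin, ← Real.exp_sum]
  rw [← Real.rpow_mul_natCast (by positivity), ← Finset.sum_div, Finset.sum_neg_distrib]
  congr 2; ring

lemma gauss_succ {N : ℕ} (x : Fin (N + 1) → ℝ) {s : ℝ} (hs : 0 < s) :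
    gauss (N + 1) x s = heatKernel (x (Fin.last N)) s * gauss N (Fin.init x) s := by
  rw [gauss_eq_prod _ hs, gauss_eq_prod _ hs, Fin.prod_univ_castSucc, mul_comm]
  rfl

lemma integrable_gauss (N : ℕ) (y : Fin N → ℝ) {s : ℝ} (hs : 0 < s) :
    Integrable (fun x => gauss N (x - y) s) := by
  have : Integrable (fun x => gauss N x s) := by
    simp only [gauss_eq_prod _ hs]
    exact Integrable.fintype_prod fun _ => integrable_heatKernel hs
  exact this.comp_sub_right y

lemma integral_gauss (N : ℕ) (y : Fin N → ℝ) {s : ℝ} (hs : 0 < s) :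
    ∫ x, gauss N (x - y) s = 1 := by
  rw [integral_sub_right_eq_self (fun x => gauss N x s)]
  simp only [gauss_eq_prod _ hs]
  rw [integral_fintype_prod_volume_eq_prod (fun _ z => heatKernel z s)]
  simp [integral_heatKernel hs]

lemma integral_halfSpace_mul {N : ℕ} {φ : ℝ → ℝ} {ψ : (Fin N → ℝ) → ℝ}
    (hφ : IntegrableOn φ (Ioi 0)) (hψ : Integrable ψ) :
    IntegrableOn (fun x : Fin (N + 1) → ℝ => φ (x (Fin.last N)) * ψ (Fin.init x))
      {x | 0 < x (Fin.last N)} ∧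
    ∫ x in {x : Fin (N + 1) → ℝ | 0 < x (Fin.last N)}, φ (x (Fin.last N)) * ψ (Fin.init x)
      = (∫ z in Ioi 0, φ z) * ∫ x, ψ x := by
  have he := volume_preserving_piFinSuccAbove (fun _ : Fin (N + 1) => ℝ) (Fin.last N)
  have hemb := (MeasurableEquiv.piFinSuccAbove (fun _ : Fin (N + 1) => ℝ)
    (Fin.last N)).measurableEmbedding
  have hset : {x : Fin (N + 1) → ℝ | 0 < x (Fin.last N)}
      = MeasurableEquiv.piFinSuccAbove (fun _ : Fin (N + 1) => ℝ) (Fin.last N) ⁻¹'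
        (Ioi 0 ×ˢ univ) := by
    ext x
    simp [MeasurableEquiv.piFinSuccAbove, Fin.insertNthEquiv]
  have hfun (x : Fin (N + 1) → ℝ) : φ (x (Fin.last N)) * ψ (Fin.init x)
      = (fun p : ℝ × (Fin N → ℝ) => φ p.1 * ψ p.2)
        (MeasurableEquiv.piFinSuccAbove (fun _ : Fin (N + 1) => ℝ) (Fin.last N) x) := by
    simp [MeasurableEquiv.piFinSuccAbove, Fin.insertNthEquiv, Fin.removeNth_last]
  have hmeas : (volume : Measure (ℝ × (Fin N → ℝ))).restrict (Ioi 0 ×ˢ univ)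
      = (volume.restrict (Ioi 0)).prod volume := by
    rw [Measure.volume_eq_prod, ← Measure.prod_restrict, Measure.restrict_univ]
  simp only [hfun]
  rw [hset]
  constructor
  · refine (he.integrableOn_comp_preimage hemb
      (f := fun p : ℝ × (Fin N → ℝ) => φ p.1 * ψ p.2)).2 ?_
    rw [IntegrableOn, hmeas]
    exact hφ.mul_prod hψ
  · refine (he.setIntegral_preimage_emb hemb
      (fun p : ℝ × (Fin N → ℝ) => φ p.1 * ψ p.2) _).trans ?_
    rw [hmeas]
    exact integral_prod_mul φ ψ

lemma integral_intervalIntegral_of_nonneg {β : Type*} [MeasurableSpace β] {ν : Measure β}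
    [SFinite ν] {f : ℝ → β → ℝ} {I : ℝ → ℝ} {t : ℝ} (ht : 0 ≤ t)
    (hm : Measurable (Function.uncurry f))
    (h0 : ∀ τ ∈ Ioo 0 t, ∀ᵐ x ∂ν, 0 ≤ f τ x)
    (hint : ∀ τ ∈ Ioo 0 t, Integrable (f τ) ν)
    (hI : ∀ τ ∈ Ioo 0 t, ∫ x, f τ x ∂ν = I τ)
    (hII : IntegrableOn I (Ioo 0 t)) :
    Integrable (fun x => ∫ τ in (0 : ℝ)..t, f τ x) ν ∧
      ∫ x, (∫ τ in (0 : ℝ)..t, f τ x) ∂ν = ∫ τ in (0 : ℝ)..t, I τ := by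
  have hp : Integrable (Function.uncurry f) ((volume.restrict (Ioo 0 t)).prod ν) := by
    rw [integrable_prod_iff hm.aestronglyMeasurable]
    refine ⟨(ae_restrict_iff' measurableSet_Ioo).2 (Filter.Eventually.of_forall hint), ?_⟩
    refine hII.congr_fun (fun τ hτ => ?_) measurableSet_Ioo
    rw [← hI τ hτ]
    refine integral_congr_ae ?_
    filter_upwards [h0 τ hτ] with x hx
    simp [Function.uncurry, abs_of_nonneg hx]
  simp only [intervalIntegral.integral_of_le ht, integral_Ioc_eq_integral_Ioo]
  refine ⟨hp.integral_prod_right, ?_⟩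
  rw [← integral_integral_swap hp]
  exact setIntegral_congr_fun measurableSet_Ioo hI

lemma integral_Ioi_heatKernel_mul {a s : ℝ} (ha : 0 ≤ a) (hs : 0 < s) :
    IntegrableOn (fun z => heatKernel (z + a) s * ((z + a) / s)) (Ioi 0) ∧
      ∫ z in Ioi 0, heatKernel (z + a) s * ((z + a) / s) = 2 * heatKernel a s := by
  have hd (z : ℝ) : HasDerivAt (fun z => -2 * heatKernel (z + a) s)
      (heatKernel (z + a) s * ((z + a) / s)) z :=
    (hasDerivAt_heatKernel (z + a) hs).comp_add_const z a
  have hl : Filter.Tendsto (fun z => -2 * heatKernel (z + a) s) Filter.atTop (nhds 0) :=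
    (tendsto_heatKernel_atTop hs).comp (Filter.tendsto_atTop_add_const_right _ a Filter.tendsto_id)
  have hi : IntegrableOn (fun z => heatKernel (z + a) s * ((z + a) / s)) (Ioi 0) :=
    integrableOn_Ioi_deriv_of_nonneg (hd 0).continuousAt.continuousWithinAt (fun z _ => hd z)
      (fun z hz => mul_nonneg (heatKernel_nonneg _ hs)
        (div_nonneg (add_nonneg (le_of_lt hz) ha) hs.le)) hl
  refine ⟨hi, ?_⟩
  rw [integral_Ioi_of_hasDerivAt_of_tendsto (hd 0).continuousAt.continuousWithinAt
    (fun z _ => hd z) hi hl]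
  simp

lemma integral_Ioi_heatKernel_sub (b : ℝ) {s : ℝ} (hs : 0 < s) :
    IntegrableOn (fun z => heatKernel (z - b) s - heatKernel (z + b) s) (Ioi 0) ∧
      ∫ z in Ioi 0, (heatKernel (z - b) s - heatKernel (z + b) s) = errorFn (b / (2 * √s)) := by
  have hi : Integrable (fun z => heatKernel (z - b) s - heatKernel (z + b) s) :=
    ((integrable_heatKernel hs).comp_sub_right b).sub ((integrable_heatKernel hs).comp_add_right b)
  refine ⟨hi.integrableOn, ?_⟩
  have hd (z : ℝ) : HasDerivAt
      (fun z => (errorFn ((z - b) / (2 * √s)) - errorFn ((z + b) / (2 * √s))) / 2)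
      (heatKernel (z - b) s - heatKernel (z + b) s) z := by
    refine ((((hasDerivAt_errorFn_space (z - b) hs).comp_sub_const z b).sub
      ((hasDerivAt_errorFn_space (z + b) hs).comp_add_const z b)).div_const 2).congr_deriv ?_
    ring
  have hl (c : ℝ) : Filter.Tendsto (fun z => errorFn ((z + c) / (2 * √s))) Filter.atTop
      (nhds 1) := by
    refine tendsto_errorFn_atTop.comp (Filter.Tendsto.atTop_div_const (by positivity) ?_)
    exact Filter.tendsto_atTop_add_const_right _ c Filter.tendsto_id
  rw [integral_Ioi_of_hasDerivAt_of_tendsto (hd 0).continuousAt.continuousWithinAt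
    (fun z _ => hd z) hi.integrableOn (((hl (-b)).sub (hl b)).div_const 2)]
  simp only [zero_sub, zero_add, neg_div, errorFn_neg]
  ring

lemma integral_heatKernel_along_drift {b t : ℝ} (hb : 0 ≤ b) (ht : 0 < t) :
    IntegrableOn (fun τ => 2 * heatKernel (b + τ) (t - τ)) (Ioo 0 t) ∧
    IntegrableOn (fun τ => heatKernel (b + τ) (t - τ) * ((b + τ) / (t - τ))) (Ioo 0 t) ∧
    (∫ τ in (0 : ℝ)..t, 2 * heatKernel (b + τ) (t - τ))
      + (∫ τ in (0 : ℝ)..t, heatKernel (b + τ) (t - τ) * ((b + τ) / (t - τ)))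
      = 1 - errorFn (b / (2 * √t)) := by
  set F : ℝ → ℝ := Function.update (fun τ => errorFn ((b + τ) / (2 * √(t - τ)))) t 1 with hF
  have hne {τ : ℝ} (h : τ < t) : F =ᶠ[nhds τ] fun τ => errorFn ((b + τ) / (2 * √(t - τ))) := by
    filter_upwards [Iio_mem_nhds h] with u hu
    exact Function.update_of_ne (ne_of_lt hu) _ _
  have hd {τ : ℝ} (h : τ < t) : HasDerivAt F (2 * heatKernel (b + τ) (t - τ)
      + heatKernel (b + τ) (t - τ) * ((b + τ) / (t - τ))) τ :=
    (hasDerivAt_errorFn_time b t τ h).congr_of_eventuallyEq (hne h)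
  have hA {τ : ℝ} (h : τ ∈ Ioo 0 t) : 0 ≤ 2 * heatKernel (b + τ) (t - τ) :=
    mul_nonneg zero_le_two (heatKernel_nonneg _ (sub_pos.2 h.2))
  have hB {τ : ℝ} (h : τ ∈ Ioo 0 t) :
      0 ≤ heatKernel (b + τ) (t - τ) * ((b + τ) / (t - τ)) :=
    mul_nonneg (heatKernel_nonneg _ (sub_pos.2 h.2))
      (div_nonneg (add_nonneg hb h.1.le) (sub_pos.2 h.2).le)
  have hlim : Filter.Tendsto (fun τ => (b + τ) / (2 * √(t - τ))) (nhdsWithin t (Iio t))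
      Filter.atTop := by
    have h0 : Filter.Tendsto (fun τ => 2 * √(t - τ)) (nhdsWithin t (Iio t))
        (nhdsWithin 0 (Ioi 0)) := by
      refine tendsto_nhdsWithin_iff.2 ⟨?_, ?_⟩
      · have : Continuous fun τ => 2 * √(t - τ) := by fun_prop
        simpa using this.continuousAt (x := t) |>.tendsto.mono_left nhdsWithin_le_nhds
      · filter_upwards [self_mem_nhdsWithin] with τ hτ
        have : 0 < t - τ := sub_pos.2 hτ
        simp only [mem_Ioi]
        positivity
    have h1 : Filter.Tendsto (fun τ => b + τ) (nhdsWithin t (Iio t)) (nhds (b + t)) :=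
      ((continuous_const.add continuous_id).tendsto t).mono_left nhdsWithin_le_nhds
    simpa only [div_eq_mul_inv, Function.comp_def] using
      h1.pos_mul_atTop (add_pos_of_nonneg_of_pos hb ht) (tendsto_inv_nhdsGT_zero.comp h0)
  have hc : ContinuousOn F (Icc 0 t) := by
    intro τ hτ
    rcases hτ.2.lt_or_eq with h | rfl
    · exact (hd h).continuousAt.continuousWithinAt
    · refine (continuousWithinAt_update_same.2 ?_)
      refine (tendsto_errorFn_atTop.comp hlim).mono_left (nhdsWithin_mono _ ?_)
      exact fun u hu => lt_of_le_of_ne hu.1.2 hu.2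
  have hAB : IntegrableOn (fun τ => 2 * heatKernel (b + τ) (t - τ)
      + heatKernel (b + τ) (t - τ) * ((b + τ) / (t - τ))) (Ioc 0 t) :=
    intervalIntegral.integrableOn_deriv_of_nonneg hc (fun τ hτ => hd hτ.2)
      fun τ hτ => add_nonneg (hA hτ) (hB hτ)
  have hAB' := hAB.mono_set Ioo_subset_Ioc_self
  have hiA : IntegrableOn (fun τ => 2 * heatKernel (b + τ) (t - τ)) (Ioo 0 t) := by
    refine hAB'.mono' (Measurable.aestronglyMeasurable (by unfold heatKernel; fun_prop)) ?_
    refine (ae_restrict_iff' measurableSet_Ioo).2 (Filter.Eventually.of_forall fun τ hτ => ?_)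
    rw [Real.norm_of_nonneg (hA hτ)]
    exact le_add_of_nonneg_right (hB hτ)
  have hiB : IntegrableOn (fun τ => heatKernel (b + τ) (t - τ) * ((b + τ) / (t - τ)))
      (Ioo 0 t) := by
    refine hAB'.mono' (Measurable.aestronglyMeasurable (by unfold heatKernel; fun_prop)) ?_
    refine (ae_restrict_iff' measurableSet_Ioo).2 (Filter.Eventually.of_forall fun τ hτ => ?_)
    rw [Real.norm_of_nonneg (hB hτ)]
    exact le_add_of_nonneg_left (hA hτ)
  refine ⟨hiA, hiB, ?_⟩
  rw [← intervalIntegral.integral_add ((intervalIntegrable_iff_integrableOn_Ioo_of_le ht.le).2 hiA)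
    ((intervalIntegrable_iff_integrableOn_Ioo_of_le ht.le).2 hiB),
    intervalIntegral.integral_eq_sub_of_hasDerivAt_of_le ht.le hc (fun τ hτ => hd hτ.2)
      ((intervalIntegrable_iff_integrableOn_Ioc_of_le ht.le).2 hAB)]
  simp [hF, ht.ne]

/-- The integrand of `Hexp`, split into normal and tangential factors. -/
noncomputable def driftKernel (N : ℕ) (y : Fin (N + 1) → ℝ) (t τ : ℝ) (x : Fin (N + 1) → ℝ) : ℝ :=
  heatKernel (x (Fin.last N) + (y (Fin.last N) + τ)) (t - τ)
    * ((x (Fin.last N) + (y (Fin.last N) + τ)) / (t - τ))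
    * gauss N (Fin.init x - Fin.init y) (t - τ)

lemma Hexp_eq (N : ℕ) (x y : Fin (N + 1) → ℝ) {t : ℝ} (ht : 0 < t) :
    Hexp N x y t = ∫ τ in (0 : ℝ)..t, driftKernel N y t τ x := by
  simp only [Hexp, intervalIntegral.integral_of_le ht.le, integral_Ioc_eq_integral_Ioo]
  refine setIntegral_congr_fun measurableSet_Ioo fun τ hτ => ?_
  have hs : 0 < t - τ := sub_pos.2 hτ.2
  have h := gauss_succ (fun i => x i - ystar N y i + τ * eN N i) hs
  have hi : Fin.init (fun i => x i - ystar N y i + τ * eN N i) = Fin.init x - Fin.init y := by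
    ext i
    simp [Fin.init, ystar, eN, (Fin.castSucc_lt_last i).ne]
  rw [hi, gauss] at h
  push_cast at h
  simp only [driftKernel]
  rw [mul_right_comm, h]
  simp only [ystar, eN, Function.update_self, Pi.single_eq_same, sub_neg_eq_add, mul_one,
    add_assoc]
  ring

lemma measurable_driftKernel (N : ℕ) (y : Fin (N + 1) → ℝ) (t : ℝ) :
    Measurable (Function.uncurry (driftKernel N y t)) := by
  unfold Function.uncurry driftKernel heatKernel gauss
  simp only [Pi.sub_apply, Fin.init]
  fun_prop

lemma gauss_sub_gauss_ystar (N : ℕ) (x y : Fin (N + 1) → ℝ) {t : ℝ} (ht : 0 < t) :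
    gauss (N + 1) (x - y) t - gauss (N + 1) (x - ystar N y) t
      = (heatKernel (x (Fin.last N) - y (Fin.last N)) t
          - heatKernel (x (Fin.last N) + y (Fin.last N)) t)
        * gauss N (Fin.init x - Fin.init y) t := by
  have h1 : Fin.init (x - y) = Fin.init x - Fin.init y := rfl
  have h2 : Fin.init (x - ystar N y) = Fin.init x - Fin.init y := by
    ext i
    simp [Fin.init, ystar, (Fin.castSucc_lt_last i).ne]
  rw [gauss_succ _ ht, gauss_succ _ ht, h1, h2, sub_mul]
  simp [ystar]

lemma gauss_nonneg (N : ℕ) (x : Fin N → ℝ) {s : ℝ} (hs : 0 < s) : 0 ≤ gauss N x s := by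
  unfold gauss; positivity

lemma driftKernel_nonneg {N : ℕ} {x y : Fin (N + 1) → ℝ} (hy : 0 ≤ y (Fin.last N))
    (hx : 0 ≤ x (Fin.last N)) {t τ : ℝ} (hτ : τ ∈ Ioo 0 t) : 0 ≤ driftKernel N y t τ x := by
  have hs : 0 < t - τ := sub_pos.2 hτ.2
  have hz := add_nonneg hx (add_nonneg hy hτ.1.le)
  exact mul_nonneg (mul_nonneg (heatKernel_nonneg _ hs) (div_nonneg hz hs.le))
    (gauss_nonneg N _ hs)

lemma integral_halfSpace_Hexp {N : ℕ} {y : Fin (N + 1) → ℝ} (hy : 0 ≤ y (Fin.last N)) {t : ℝ}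
    (ht : 0 < t) :
    IntegrableOn (fun x => Hexp N x y t) {x | 0 < x (Fin.last N)} ∧
      ∫ x in {x : Fin (N + 1) → ℝ | 0 < x (Fin.last N)}, Hexp N x y t
        = ∫ τ in (0 : ℝ)..t, 2 * heatKernel (y (Fin.last N) + τ) (t - τ) := by
  simp only [Hexp_eq N _ y ht]
  have hΩ : MeasurableSet {x : Fin (N + 1) → ℝ | 0 < x (Fin.last N)} :=
    measurableSet_lt measurable_const (measurable_pi_apply _)
  have key (τ : ℝ) (hτ : τ ∈ Ioo 0 t) :=
    integral_halfSpace_mul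
      (integral_Ioi_heatKernel_mul (add_nonneg hy hτ.1.le) (sub_pos.2 hτ.2)).1
      (integrable_gauss N (Fin.init y) (sub_pos.2 hτ.2))
  refine integral_intervalIntegral_of_nonneg ht.le (measurable_driftKernel N y t) (fun τ hτ => ?_)
    (fun τ hτ => (key τ hτ).1) (fun τ hτ => (key τ hτ).2.trans ?_)
    (integral_heatKernel_along_drift hy ht).1
  · exact (ae_restrict_iff' hΩ).2
      (Filter.Eventually.of_forall fun x hx => driftKernel_nonneg hy (le_of_lt hx) hτ)
  · rw [integral_gauss N _ (sub_pos.2 hτ.2), mul_one]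
    exact (integral_Ioi_heatKernel_mul (add_nonneg hy hτ.1.le) (sub_pos.2 hτ.2)).2

lemma integral_boundary_Hexp {N : ℕ} {y : Fin (N + 1) → ℝ} (hy : 0 ≤ y (Fin.last N)) {t : ℝ}
    (ht : 0 < t) :
    ∫ x' : Fin N → ℝ, Hexp N (Fin.snoc x' 0) y t
        = ∫ τ in (0 : ℝ)..t, heatKernel (y (Fin.last N) + τ) (t - τ)
          * ((y (Fin.last N) + τ) / (t - τ)) := by
  simp only [Hexp_eq N _ y ht]
  have hf (τ : ℝ) (x' : Fin N → ℝ) : driftKernel N y t τ (Fin.snoc x' (0 : ℝ))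
      = heatKernel (y (Fin.last N) + τ) (t - τ) * ((y (Fin.last N) + τ) / (t - τ))
        * gauss N (x' - Fin.init y) (t - τ) := by
    simp [driftKernel]
  refine (integral_intervalIntegral_of_nonneg ht.le
    (f := fun τ (x' : Fin N → ℝ) => driftKernel N y t τ (Fin.snoc x' (0 : ℝ)))
    ?_ (fun τ hτ => ?_) (fun τ hτ => ?_)
    (fun τ hτ => ?_) (integral_heatKernel_along_drift hy ht).2.1).2
  · simp only [hf]
    unfold Function.uncurry heatKernel gauss
    simp only [Pi.sub_apply]
    fun_prop
  · exact Filter.Eventually.of_forall fun x' => driftKernel_nonneg hy (by simp) hτ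
  · simp only [hf]
    exact (integrable_gauss N _ (sub_pos.2 hτ.2)).const_mul _
  · simp only [hf]
    rw [integral_const_mul, integral_gauss N _ (sub_pos.2 hτ.2), mul_one]

/-- Mass identity: `∫_Ω G(x,y,t) dx + ∫_{∂Ω} G(x,y,t) dσ(x) = 1` for every `y` in the
closed upper half-space and `t > 0` (dimension is `N+1 ≥ 1`). -/
theorem stmt_5 (N : ℕ) (y : Fin (N + 1) → ℝ) (hy : 0 ≤ y (Fin.last N)) (t : ℝ) (ht : 0 < t) :
    (∫ x in {x : Fin (N + 1) → ℝ | 0 < x (Fin.last N)}, Gker N x y t)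
      + (∫ x' : Fin N → ℝ, Gker N (Fin.snoc x' 0) y t) = 1 := by
  have hg := integral_halfSpace_mul (integral_Ioi_heatKernel_sub (y (Fin.last N)) ht).1
    (integrable_gauss N (Fin.init y) ht)
  have hH := integral_halfSpace_Hexp hy ht
  have hΩ : ∫ x in {x : Fin (N + 1) → ℝ | 0 < x (Fin.last N)}, Gker N x y t
      = errorFn (y (Fin.last N) / (2 * √t))
        + ∫ τ in (0 : ℝ)..t, 2 * heatKernel (y (Fin.last N) + τ) (t - τ) := by
    simp only [Gker, gauss_sub_gauss_ystar N _ y ht]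
    rw [integral_add hg.1 hH.1, hg.2, hH.2, integral_gauss N _ ht, mul_one,
      (integral_Ioi_heatKernel_sub _ ht).2]
  have hb (x' : Fin N → ℝ) : Gker N (Fin.snoc x' 0) y t = Hexp N (Fin.snoc x' 0) y t := by
    rw [Gker, gauss_sub_gauss_ystar N _ y ht]
    simp [heatKernel]
  simp only [hΩ, hb]
  rw [integral_boundary_Hexp hy ht]
  linarith [(integral_heatKernel_along_drift hy ht).2.2]
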